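/- Suppose U is a unitary on (ℂ²)^{⊗(n+2)} ⊗ (ℂ²)^{⊗α} such that (Π_k^± ⊗ ⟨0^α|) U (Π_k^± ⊗ |0^α⟩) = Π_k^± P^{down} Π_k^±. Then V := ((I^{⊗n} ⊗ (HZ) ⊗ I) ⊗ I^{⊗α}) U satisfies (Π_k ⊗ ⟨0^α|) V (Π_k ⊗ |0^α⟩) = Δ_k^{down} / (√2 · K^{down}). -/

import Mathlib

open BigOperators Matrix Kronecker

attribute [local instance] Classical.propDecidable

noncomputable section

namespace QWSC

/-- A finite abstract simplicial complex on the vertex set `Fin n`: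
a family of vertex sets closed under taking subsets. -/
def IsComplex (n : ℕ) (X : Finset (Finset (Fin n))) : Prop :=
  ∀ s ∈ X, ∀ t ⊆ s, t ∈ X

/-- The weighted boundary operator `∂_k : C_k → C_{k-1}` written as a matrix in the
orthonormal chain bases (rows are indexed by `(k-1)`-simplices, columns by `k`-simplices;
a `k`-simplex has `k+1` vertices).  On the orthonormal basis vector of
`σ = {v_0 < … < v_k}` it has entries `(-1)^j w(v_j)` at the face `σ \ {v_j}`. -/
def boundary (n : ℕ) (X : Finset (Finset (Fin n))) (w : Fin n → ℝ) (k : ℕ) :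
    Matrix (Finset (Fin n)) (Finset (Fin n)) ℝ :=
  Matrix.of fun τ σ =>
    if σ ∈ X ∧ σ.card = k + 1 ∧ τ ⊆ σ ∧ τ.card = k then
      ∑ v ∈ σ \ τ, (-1 : ℝ) ^ ((σ.filter fun u => u < v).card) * w v
    else 0

/-- The weighted up Laplacian `Δ_k^{up} = ∂_{k+1} ∂_{k+1}^*`. -/
def upLap (n : ℕ) (X : Finset (Finset (Fin n))) (w : Fin n → ℝ) (k : ℕ) :
    Matrix (Finset (Fin n)) (Finset (Fin n)) ℝ :=
  boundary n X w (k + 1) * (boundary n X w (k + 1))ᵀ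

/-- The weighted down Laplacian `Δ_k^{down} = ∂_k^* ∂_k`. -/
def downLap (n : ℕ) (X : Finset (Finset (Fin n))) (w : Fin n → ℝ) (k : ℕ) :
    Matrix (Finset (Fin n)) (Finset (Fin n)) ℝ :=
  (boundary n X w k)ᵀ * boundary n X w k

/-- The weighted combinatorial Laplacian `Δ_k = Δ_k^{up} + Δ_k^{down}`. -/
def fullLap (n : ℕ) (X : Finset (Finset (Fin n))) (w : Fin n → ℝ) (k : ℕ) :
    Matrix (Finset (Fin n)) (Finset (Fin n)) ℝ :=
  upLap n X w k + downLap n X w k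

/-- `true` iff removing the vertex `v` from `σ` reverses the induced orientation,
i.e. the position of `v` in the increasing ordering of `σ` is odd. -/
def faceFlip (n : ℕ) (σ : Finset (Fin n)) (v : Fin n) : Bool :=
  decide ((σ.filter fun u => u < v).card % 2 = 1)

/-- An oriented simplex: a vertex set together with an orientation bit
(`false` = positively oriented, `true` = negatively oriented). -/
abbrev OSimp (n : ℕ) := Finset (Fin n) × Bool

/-- Up-adjacency `σ ∼↑ σ'` of oriented simplices: the vertex sets are distinct, their
union is a common coface belonging to `X`, and the orientations induced on the common
coface by `σ` and by `σ'` agree. -/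
def UpAdj (n : ℕ) (X : Finset (Finset (Fin n))) (σ σ' : OSimp n) : Prop :=
  σ.1 ≠ σ'.1 ∧ σ.1 ∪ σ'.1 ∈ X ∧ (σ.1 ∪ σ'.1).card = σ.1.card + 1 ∧
    σ'.1.card = σ.1.card ∧
    ∀ v ∈ σ'.1 \ σ.1, ∀ v' ∈ σ.1 \ σ'.1,
      xor σ.2 (faceFlip n (σ.1 ∪ σ'.1) v) = xor σ'.2 (faceFlip n (σ.1 ∪ σ'.1) v')

/-- Down-adjacency `σ ∼↓ σ'` of oriented simplices: the vertex sets are distinct, they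
share a common face (their intersection, of cardinality one less), and the orientations
induced on the common face by `σ` and by `σ'` agree. -/
def DownAdj (n : ℕ) (σ σ' : OSimp n) : Prop :=
  σ.1 ≠ σ'.1 ∧ (σ.1 ∩ σ'.1).card + 1 = σ.1.card ∧ σ'.1.card = σ.1.card ∧
    ∀ v ∈ σ.1 \ σ'.1, ∀ v' ∈ σ'.1 \ σ.1,
      xor σ.2 (faceFlip n σ.1 v) = xor σ'.2 (faceFlip n σ'.1 v')

/-- `up(σ)`: the vertices `u ∉ σ` with `σ ∪ {u} ∈ X`. -/
def upSet (n : ℕ) (X : Finset (Finset (Fin n))) (σ : Finset (Fin n)) : Finset (Fin n) :=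
  Finset.univ.filter fun u => u ∉ σ ∧ insert u σ ∈ X

/-- The set of `k`-simplices of `X` (those with `k+1` vertices). -/
def simplices (n : ℕ) (X : Finset (Finset (Fin n))) (k : ℕ) : Finset (Finset (Fin n)) :=
  X.filter fun s => s.card = k + 1

/-- Normalization constant `K^{up} = max_{σ∈X_k} Σ_{u∈V∖σ} Σ_{v∈σ∪{u}} w(u)w(v)`. -/
def Kup (n : ℕ) (X : Finset (Finset (Fin n))) (w : Fin n → ℝ) (k : ℕ) : ℝ :=
  sSup {x : ℝ | ∃ σ ∈ X, σ.card = k + 1 ∧ x = ∑ u ∈ σᶜ, ∑ v ∈ insert u σ, w u * w v}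

/-- Normalization constant `K^{down} = max_{σ∈X_k} Σ_{u∈σ} Σ_{v∈V∖(σ∖{u})} w(u)w(v)`. -/
def Kdown (n : ℕ) (X : Finset (Finset (Fin n))) (w : Fin n → ℝ) (k : ℕ) : ℝ :=
  sSup {x : ℝ | ∃ σ ∈ X, σ.card = k + 1 ∧ x = ∑ u ∈ σ, ∑ v ∈ (σ.erase u)ᶜ, w u * w v}

/-- Normalization constant `K = max_{σ∈X_k} (Σ_{v∈V} w(v)² + Σ_{u∈V∖σ} Σ_{v∈σ} w(u)w(v))`. -/
def Kfull (n : ℕ) (X : Finset (Finset (Fin n))) (w : Fin n → ℝ) (k : ℕ) : ℝ :=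
  sSup {x : ℝ | ∃ σ ∈ X, σ.card = k + 1 ∧
    x = (∑ v : Fin n, w v ^ 2) + ∑ u ∈ σᶜ, ∑ v ∈ σ, w u * w v}

/-- The `k`-th chain space `C_k`: the span of the basis vectors indexed by
`k`-simplices of `X`, inside the coordinate space of the orthonormal chain basis. -/
def chainSpace (n : ℕ) (X : Finset (Finset (Fin n))) (k : ℕ) :
    Submodule ℝ (Finset (Fin n) → ℝ) :=
  Submodule.span ℝ ((fun σ => Pi.single σ (1 : ℝ)) '' {σ | σ ∈ X ∧ σ.card = k + 1})

/-- The state space `S_k = X_k^± ∪ {Θ}` of the walks; `none` is the absorbing state `Θ`. -/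
abbrev SState (n : ℕ) := Option (OSimp n)

/-- A state is a member of `S_k`: either the absorbing state, or an oriented
`k`-simplex of `X`. -/
def valid (n : ℕ) (X : Finset (Finset (Fin n))) (k : ℕ) : SState n → Prop
  | none => True
  | some σ => σ.1 ∈ X ∧ σ.1.card = k + 1

/-- `η^{up}_σ = 1 − (1/K^{up}) Σ_{τ∈X_k^+} |(Δ_k^{up})_{τ,σ_+}|`. -/
def etaUp (n : ℕ) (X : Finset (Finset (Fin n))) (w : Fin n → ℝ) (k : ℕ) (σ : OSimp n) : ℝ :=
  1 - (∑ τ ∈ simplices n X k, |upLap n X w k τ σ.1|) / Kup n X w k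

/-- `η^{down}_σ = 1 − (1/K^{down}) Σ_{τ∈X_k^+} |(Δ_k^{down})_{τ,σ_+}|`. -/
def etaDown (n : ℕ) (X : Finset (Finset (Fin n))) (w : Fin n → ℝ) (k : ℕ) (σ : OSimp n) : ℝ :=
  1 - (∑ τ ∈ simplices n X k, |downLap n X w k τ σ.1|) / Kdown n X w k

/-- `η_σ = 1 − (1/K) Σ_{τ∈X_k^+} |(Δ_k)_{τ,σ_+}|`. -/
def etaFull (n : ℕ) (X : Finset (Finset (Fin n))) (w : Fin n → ℝ) (k : ℕ) (σ : OSimp n) : ℝ :=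
  1 - (∑ τ ∈ simplices n X k, |fullLap n X w k τ σ.1|) / Kfull n X w k

/-- The up-walk transition matrix `P^{up}` on `S_k`. -/
def Pup (n : ℕ) (X : Finset (Finset (Fin n))) (w : Fin n → ℝ) (k : ℕ) :
    SState n → SState n → ℝ
  | some σ, some σ' =>
      if σ.1 ∈ X ∧ σ.1.card = k + 1 ∧ σ'.1 ∈ X ∧ σ'.1.card = k + 1 then
        if σ = σ' then (∑ u ∈ upSet n X σ.1, w u ^ 2) / Kup n X w k
        else if UpAdj n X σ σ' then
          ((∑ v ∈ σ.1 \ σ'.1, w v) * (∑ v ∈ σ'.1 \ σ.1, w v)) / Kup n X w k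
        else 0
      else 0
  | some σ, none => if σ.1 ∈ X ∧ σ.1.card = k + 1 then etaUp n X w k σ else 0
  | none, none => 1
  | none, some _ => 0

/-- The down-walk transition matrix `P^{down}` on `S_k`. -/
def Pdown (n : ℕ) (X : Finset (Finset (Fin n))) (w : Fin n → ℝ) (k : ℕ) :
    SState n → SState n → ℝ
  | some σ, some σ' =>
      if σ.1 ∈ X ∧ σ.1.card = k + 1 ∧ σ'.1 ∈ X ∧ σ'.1.card = k + 1 then
        if σ = σ' then (∑ v ∈ σ.1, w v ^ 2) / Kdown n X w k
        else if DownAdj n σ σ' then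
          ((∑ v ∈ σ.1 \ σ'.1, w v) * (∑ v ∈ σ'.1 \ σ.1, w v)) / Kdown n X w k
        else 0
      else 0
  | some σ, none => if σ.1 ∈ X ∧ σ.1.card = k + 1 then etaDown n X w k σ else 0
  | none, none => 1
  | none, some _ => 0

/-- The harmonic-walk transition matrix `P` on `S_k`. -/
def Pharm (n : ℕ) (X : Finset (Finset (Fin n))) (w : Fin n → ℝ) (k : ℕ) :
    SState n → SState n → ℝ
  | some σ, some σ' =>
      if σ.1 ∈ X ∧ σ.1.card = k + 1 ∧ σ'.1 ∈ X ∧ σ'.1.card = k + 1 then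
        if σ = σ' then
          ((∑ u ∈ upSet n X σ.1, w u ^ 2) + ∑ v ∈ σ.1, w v ^ 2) / Kfull n X w k
        else if DownAdj n σ σ' ∧ ¬ UpAdj n X σ (σ'.1, !σ'.2) then
          ((∑ v ∈ σ.1 \ σ'.1, w v) * (∑ v ∈ σ'.1 \ σ.1, w v)) / Kfull n X w k
        else 0
      else 0
  | some σ, none => if σ.1 ∈ X ∧ σ.1.card = k + 1 then etaFull n X w k σ else 0
  | none, none => 1
  | none, some _ => 0

/-! ### Quantum encodings -/

/-- The computational basis of `(ℂ²)^{⊗(n+2)}`: `n` membership qubits, one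
orientation qubit, and one qubit flagging the absorbing state. -/
abbrev QIdx (n : ℕ) := (Fin n → Bool) × Bool × Bool

/-- The encoding of states of `S_k` as computational basis states:
`|σ⟩ = |x_σ⟩|s(σ)⟩|0⟩` and `|Θ⟩ = |0^n⟩|0⟩|1⟩`. -/
def encode (n : ℕ) : SState n → QIdx n
  | none => (fun _ => false, false, true)
  | some σ => (fun i => decide (i ∈ σ.1), σ.2, false)

/-- The all-zeros basis state `|0^{n+2}⟩`. -/
def zeroQ (n : ℕ) : QIdx n := (fun _ => false, false, false)

/-- The projector `Π_k^±` onto the span of the encoded oriented `k`-simplices of `X`. -/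
def PiPM (n : ℕ) (X : Finset (Finset (Fin n))) (k : ℕ) : Matrix (QIdx n) (QIdx n) ℂ :=
  Matrix.of fun p q =>
    if p = q ∧ ∃ σ : OSimp n, σ.1 ∈ X ∧ σ.1.card = k + 1 ∧ p = encode n (some σ) then 1 else 0

/-- The projector `Π_k` onto the span of the encoded positively oriented
`k`-simplices of `X`. -/
def PiK (n : ℕ) (X : Finset (Finset (Fin n))) (k : ℕ) : Matrix (QIdx n) (QIdx n) ℂ :=
  Matrix.of fun p q =>
    if p = q ∧ ∃ s ∈ X, s.card = k + 1 ∧ p = encode n (some (s, false)) then 1 else 0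

/-- Decode a basis state into the state of `S_k` it represents (if any). -/
def decodeQ (n : ℕ) : QIdx n → Option (SState n) := fun q =>
  if q.2.2 = false then some (some ((Finset.univ.filter fun i => q.1 i = true), q.2.1))
  else if q = encode n none then some none else none

/-- Identify a transition kernel `P` on `S_k` with the operator on `(ℂ²)^{⊗(n+2)}`
having `⟨σ'|P|σ⟩ = P_{σ,σ'}` for `σ, σ' ∈ S_k`, vanishing off the span of `S_k`. -/
def toQMat (n : ℕ) (P : SState n → SState n → ℝ) : Matrix (QIdx n) (QIdx n) ℂ :=
  Matrix.of fun q' q =>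
    match decodeQ n q, decodeQ n q' with
    | some σ, some σ' => (P σ σ' : ℂ)
    | _, _ => 0

/-- Identify a matrix indexed by vertex sets (acting on the chain space in the
orthonormal basis of positively oriented simplices) with an operator on
`(ℂ²)^{⊗(n+2)}` supported on the encoded positively oriented simplices. -/
def lapQ (n : ℕ) (L : Matrix (Finset (Fin n)) (Finset (Fin n)) ℝ) :
    Matrix (QIdx n) (QIdx n) ℂ :=
  Matrix.of fun q' q =>
    if q'.2.1 = false ∧ q'.2.2 = false ∧ q.2.1 = false ∧ q.2.2 = false then
      (L (Finset.univ.filter fun i => q'.1 i = true)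
         (Finset.univ.filter fun i => q.1 i = true) : ℂ)
    else 0

/-- The SWAP unitary exchanging the two `(n+2)`-qubit registers. -/
def swapMat (n : ℕ) : Matrix (QIdx n × QIdx n) (QIdx n × QIdx n) ℂ :=
  Matrix.of fun p q => if p.1 = q.2 ∧ p.2 = q.1 then 1 else 0

/-- The compression `(· ⊗ ⟨0^{n+2}|) W (· ⊗ |0^{n+2}⟩)` of an operator on two
`(n+2)`-qubit registers to the first register. -/
def compress (n : ℕ) (W : Matrix (QIdx n × QIdx n) (QIdx n × QIdx n) ℂ) :
    Matrix (QIdx n) (QIdx n) ℂ :=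
  Matrix.of fun q' q => W (q', zeroQ n) (q, zeroQ n)

/-- The compression `(· ⊗ ⟨0^α|) W (· ⊗ |0^α⟩)` of an operator on the system
register together with an `α`-qubit ancilla register. -/
def compressA (n α : ℕ) (W : Matrix (QIdx n × (Fin α → Bool)) (QIdx n × (Fin α → Bool)) ℂ) :
    Matrix (QIdx n) (QIdx n) ℂ :=
  Matrix.of fun q' q => W (q', fun _ => false) (q, fun _ => false)

/-- The gate `I^{⊗n} ⊗ (HZ) ⊗ I` acting on the orientation qubit, where `H` is the
Hadamard gate and `Z` the Pauli-Z gate. -/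
def hzGate (n : ℕ) : Matrix (QIdx n) (QIdx n) ℂ :=
  Matrix.of fun p q =>
    if p.1 = q.1 ∧ p.2.2 = q.2.2 then
      (if p.2.1 = false ∧ q.2.1 = true then -((Real.sqrt 2 : ℂ))⁻¹ else ((Real.sqrt 2 : ℂ))⁻¹)
    else 0

/-!
Every `U` satisfying the hypothesis has the entries of `P^{down}` at encoded oriented simplices.
The row of `HZ` at a positive orientation is `(⟨0| - ⟨1|) / √2`, so for positively oriented
simplices `s`, `t` the entry `⟨t|V|s⟩` is `(P_{s,t} - P_{s,-t}) / √2`, where `-t` is `t` with the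
opposite orientation.

A step of the down walk goes from `σ` to `τ` through a common oriented face: `K^{down} P_{σ,τ}` is
the sum of `w v * w u` over the pairs `v ∈ σ`, `u ∈ τ` such that removing `v` from `σ` and `u` from
`τ` leaves the same face with the same induced orientation.  The matrix element of `∂_k^* ∂_k` is
the same sum over common unoriented faces, with sign `+` if the induced orientations agree and `-`
if they are opposite, i.e. if they agree once `τ` is reversed.  Hence
`Δ_{t,s} = K^{down} (P_{s,t} - P_{s,-t})`.
-/

/-- The coordinate projection onto the span of the basis vectors indexed by `S`; it expresses
both `Π_k^±` and `Π_k`. -/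
def coordProj {ι : Type*} [DecidableEq ι] (R : Type*) [Semiring R] (S : Set ι) :
    Matrix ι ι R :=
  Matrix.diagonal (S.indicator 1)

section Compression

variable {ι R : Type*} [Fintype ι] [DecidableEq ι] [Semiring R]

theorem coordProj_mul_mul_coordProj_apply (S : Set ι) (A : Matrix ι ι R) (i j : ι) :
    (coordProj R S * A * coordProj R S) i j = if i ∈ S ∧ j ∈ S then A i j else 0 := by
  by_cases hi : i ∈ S <;> by_cases hj : j ∈ S <;> simp [coordProj, hi, hj]

theorem coordProj_mul_mul_coordProj_eq_iff {S : Set ι} {A B : Matrix ι ι R} :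
    coordProj R S * A * coordProj R S = coordProj R S * B * coordProj R S ↔
      ∀ i ∈ S, ∀ j ∈ S, A i j = B i j := by
  simp only [← Matrix.ext_iff, coordProj_mul_mul_coordProj_apply]
  refine ⟨fun h i hi j hj => by simpa [hi, hj] using h i j, fun h i j => ?_⟩
  split_ifs with hij
  exacts [h i hij.1 j hij.2, rfl]

theorem coordProj_mul_mul_coordProj_eq_self {S : Set ι} {A : Matrix ι ι R}
    (h : ∀ i j, A i j ≠ 0 → i ∈ S ∧ j ∈ S) : coordProj R S * A * coordProj R S = A := by
  ext i j
  rw [coordProj_mul_mul_coordProj_apply, ite_eq_left_iff]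
  exact fun hij => (not_imp_comm.mp (h i j) hij).symm

end Compression

section Erase

variable {β : Type*} [DecidableEq β] {s t : Finset β} {u v : β}

theorem erase_eq_iff_of_card_eq {k : ℕ} (hs : s.card = k + 1) (hv : v ∈ s) :
    s.erase v = t ↔ (t ⊆ s ∧ t.card = k) ∧ v ∉ t := by
  constructor
  · rintro rfl
    simp [Finset.erase_subset, Finset.card_erase_of_mem hv, hs]
  · rintro ⟨⟨hts, ht⟩, hvt⟩
    refine (Finset.eq_of_subset_of_card_le (Finset.subset_erase.mpr ⟨hts, hvt⟩) ?_).symm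
    simp [Finset.card_erase_of_mem hv, hs, ht]

theorem sdiff_eq_singleton_of_erase_eq_erase (hne : s ≠ t) (hv : v ∈ s)
    (hu : u ∈ t) (h : s.erase v = t.erase u) : s \ t = {v} := by
  have hvt : v ∉ t := fun hvt => by
    obtain rfl : v = u := by
      by_contra hvu
      exact Finset.notMem_erase v s (h ▸ Finset.mem_erase.mpr ⟨hvu, hvt⟩)
    exact hne (by rw [← Finset.insert_erase hv, h, Finset.insert_erase hu])
  rw [← Finset.insert_erase hv, h, Finset.insert_sdiff_of_notMem _ hvt,
    Finset.sdiff_eq_empty_iff_subset.mpr (Finset.erase_subset u t), insert_empty_eq]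

end Erase

variable {n k : ℕ} {X : Finset (Finset (Fin n))} {w : Fin n → ℝ} {s t : Finset (Fin n)}

theorem mem_simplices : s ∈ simplices n X k ↔ s ∈ X ∧ s.card = k + 1 :=
  Finset.mem_filter

theorem decodeQ_encode (x : SState n) : decodeQ n (encode n x) = some x := by
  cases x <;> simp [decodeQ, encode]

theorem encode_filter {p : QIdx n} (hp : p.2.2 = false) :
    encode n (some (Finset.univ.filter fun i => p.1 i = true, p.2.1)) = p := by
  simp [encode, ← hp]

theorem toQMat_encode (P : SState n → SState n → ℝ) (x y : SState n) :
    toQMat n P (encode n y) (encode n x) = P x y := by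
  simp [toQMat, decodeQ_encode]

theorem lapQ_encode (L : Matrix (Finset (Fin n)) (Finset (Fin n)) ℝ) :
    lapQ n L (encode n (some (t, false))) (encode n (some (s, false))) = L t s := by
  simp [lapQ, encode]

theorem PiPM_eq_coordProj :
    PiPM n X k =
      coordProj ℂ ((fun σ => encode n (some σ)) '' {σ | σ.1 ∈ simplices n X k}) := by
  ext p q
  simp [PiPM, coordProj, Matrix.diagonal_apply, Set.indicator_apply, mem_simplices, ite_and,
    and_assoc, eq_comm]

theorem PiK_eq_coordProj :
    PiK n X k =
      coordProj ℂ ((fun s => encode n (some (s, false))) '' (simplices n X k : Set _)) := by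
  ext p q
  simp [PiK, coordProj, Matrix.diagonal_apply, Set.indicator_apply, mem_simplices, ite_and,
    and_assoc, eq_comm]

theorem PiK_mul_lapQ_mul_PiK {L : Matrix (Finset (Fin n)) (Finset (Fin n)) ℝ}
    (hL : ∀ t s, L t s ≠ 0 → t ∈ simplices n X k ∧ s ∈ simplices n X k) :
    PiK n X k * lapQ n L * PiK n X k = lapQ n L := by
  rw [PiK_eq_coordProj]
  refine coordProj_mul_mul_coordProj_eq_self fun p q hpq => ?_
  obtain ⟨⟨hp, hp', hq, hq'⟩, h⟩ := ite_ne_right_iff.mp hpq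
  obtain ⟨ht, hs⟩ := hL _ _ (Complex.ofReal_ne_zero.mp h)
  exact ⟨⟨_, ht, by simpa [hp] using encode_filter hp'⟩,
    ⟨_, hs, by simpa [hq] using encode_filter hq'⟩⟩

theorem compressA_kronecker_one_mul {α : ℕ} (A : Matrix (QIdx n) (QIdx n) ℂ)
    (U : Matrix (QIdx n × (Fin α → Bool)) (QIdx n × (Fin α → Bool)) ℂ) :
    compressA n α ((A ⊗ₖ (1 : Matrix (Fin α → Bool) (Fin α → Bool) ℂ)) * U) =
      A * compressA n α U := by
  ext p q
  simp [compressA, Matrix.mul_apply, Fintype.sum_prod_type, Matrix.one_apply]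

theorem hzGate_mul_apply_encode (A : Matrix (QIdx n) (QIdx n) ℂ) (q : QIdx n) :
    (hzGate n * A) (encode n (some (s, false))) q =
      (Real.sqrt 2 : ℂ)⁻¹ *
        (A (encode n (some (s, false))) q - A (encode n (some (s, true))) q) := by
  rw [Matrix.mul_apply, Fintype.sum_prod_type,
    Finset.sum_eq_single_of_mem (encode n (some (s, false))).1 (Finset.mem_univ _)]
  · simp [hzGate, encode, Fintype.sum_prod_type, mul_add, sub_eq_neg_add]
  · intro f _ hf
    simp [hzGate, hf.symm]

/-- The incidence number `(-1)^j` of the face of `s = {v_0 < … < v_k}` opposite to `v = v_j`. -/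
def faceSign (s : Finset (Fin n)) (v : Fin n) : ℝ :=
  (-1) ^ (s.filter fun u => u < v).card

theorem faceSign_eq_ite (s : Finset (Fin n)) (v : Fin n) :
    faceSign s v = if faceFlip n s v then -1 else 1 := by
  rcases Nat.even_or_odd (s.filter fun u => u < v).card with h | h
  · simp [faceSign, faceFlip, h.neg_one_pow, Nat.even_iff.mp h]
  · simp [faceSign, faceFlip, h.neg_one_pow, Nat.odd_iff.mp h]

/-- The face of `σ` opposite to the vertex `v`, with the orientation induced by `σ`. -/
def inducedFace (σ : OSimp n) (v : Fin n) : OSimp n :=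
  (σ.1.erase v, xor σ.2 (faceFlip n σ.1 v))

theorem boundary_apply (hs : s ∈ simplices n X k) (t : Finset (Fin n)) :
    boundary n X w k t s = ∑ v ∈ s, if s.erase v = t then faceSign s v * w v else 0 := by
  obtain ⟨hsX, hsk⟩ := mem_simplices.mp hs
  calc boundary n X w k t s
      = if t ⊆ s ∧ t.card = k then ∑ v ∈ s with v ∉ t, faceSign s v * w v else 0 := by
        simp [boundary, faceSign, hsX, hsk, Finset.filter_notMem_eq_sdiff]
    _ = ∑ v ∈ s, if (t ⊆ s ∧ t.card = k) ∧ v ∉ t then faceSign s v * w v else 0 := by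
        split_ifs with h <;> simp [h, Finset.sum_filter]
    _ = ∑ v ∈ s, if s.erase v = t then faceSign s v * w v else 0 :=
        Finset.sum_congr rfl fun v hv => by simp only [erase_eq_iff_of_card_eq hsk hv]

theorem downLap_apply (ht : t ∈ simplices n X k) (hs : s ∈ simplices n X k) :
    downLap n X w k t s = ∑ v ∈ s, ∑ u ∈ t,
      if s.erase v = t.erase u then faceSign s v * faceSign t u * (w v * w u) else 0 := by
  calc downLap n X w k t s
      = ∑ r, boundary n X w k r s * boundary n X w k r t := by
        simp only [downLap, Matrix.mul_apply, Matrix.transpose_apply, mul_comm]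
    _ = ∑ v ∈ s, ∑ u ∈ t, ∑ r, (if s.erase v = r then faceSign s v * w v else 0) *
          if t.erase u = r then faceSign t u * w u else 0 := by
        simp only [boundary_apply hs, boundary_apply ht, Finset.sum_mul_sum]
        rw [Finset.sum_comm]
        exact Finset.sum_congr rfl fun v _ => Finset.sum_comm
    _ = _ := by
        simp only [ite_mul, zero_mul, Finset.sum_ite_eq, Finset.mem_univ, if_true, mul_ite,
          mul_zero, mul_mul_mul_comm]

theorem mem_simplices_of_downLap_ne_zero (h : downLap n X w k t s ≠ 0) :
    t ∈ simplices n X k ∧ s ∈ simplices n X k := by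
  rw [downLap, Matrix.mul_apply] at h
  obtain ⟨r, -, hr⟩ := Finset.exists_ne_zero_of_sum_ne_zero h
  obtain ⟨htX, htk, -⟩ := (ite_ne_right_iff.mp (left_ne_zero_of_mul hr)).1
  obtain ⟨hsX, hsk, -⟩ := (ite_ne_right_iff.mp (right_ne_zero_of_mul hr)).1
  exact ⟨mem_simplices.mpr ⟨htX, htk⟩, mem_simplices.mpr ⟨hsX, hsk⟩⟩

theorem inducedFace_eq_inducedFace_iff_downAdj {σ τ : OSimp n} {u v : Fin n} (hne : σ.1 ≠ τ.1)
    (hv : v ∈ σ.1) (hu : u ∈ τ.1) :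
    inducedFace σ v = inducedFace τ u ↔ DownAdj n σ τ ∧ v ∉ τ.1 ∧ u ∉ σ.1 := by
  constructor
  · intro h
    obtain ⟨hface, horient⟩ := Prod.mk.inj h
    have hσ : σ.1 \ τ.1 = {v} := sdiff_eq_singleton_of_erase_eq_erase hne hv hu hface
    have hτ : τ.1 \ σ.1 = {u} := sdiff_eq_singleton_of_erase_eq_erase hne.symm hu hv hface.symm
    have hinter : σ.1 ∩ τ.1 = σ.1.erase v := by
      rw [← Finset.sdiff_sdiff_self_left, hσ, Finset.sdiff_singleton_eq_erase]
    refine ⟨⟨hne, ?_, ?_, by simpa [hσ, hτ] using horient⟩, ?_, ?_⟩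
    · rw [hinter, Finset.card_erase_add_one hv]
    · rw [← Finset.card_erase_add_one hu, ← hface, Finset.card_erase_add_one hv]
    · exact (Finset.mem_sdiff.mp (hσ ▸ Finset.mem_singleton_self v)).2
    · exact (Finset.mem_sdiff.mp (hτ ▸ Finset.mem_singleton_self u)).2
  · rintro ⟨⟨-, hinter, hcard, horient⟩, hvτ, huσ⟩
    have hσ : σ.1.erase v = σ.1 ∩ τ.1 :=
      (erase_eq_iff_of_card_eq hinter.symm hv).mpr (by simp [hvτ])
    have hτ : τ.1.erase u = σ.1 ∩ τ.1 :=
      (erase_eq_iff_of_card_eq (hcard.trans hinter.symm) hu).mpr (by simp [huσ])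
    exact Prod.ext (hσ.trans hτ.symm)
      (horient v (Finset.mem_sdiff.mpr ⟨hv, hvτ⟩) u (Finset.mem_sdiff.mpr ⟨hu, huσ⟩))

theorem inducedFace_mk_inj {a b : Bool} {u v : Fin n} (hv : v ∈ s) :
    inducedFace (s, a) v = inducedFace (s, b) u ↔ a = b ∧ v = u := by
  simp only [inducedFace, Prod.mk.injEq, Finset.erase_inj s hv]
  constructor
  · rintro ⟨rfl, h⟩
    exact ⟨Bool.xor_left_inj.mp h, rfl⟩
  · rintro ⟨rfl, rfl⟩
    exact ⟨rfl, rfl⟩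

theorem sum_sum_ite_inducedFace_self (a b : Bool) :
    (∑ v ∈ s, ∑ u ∈ s, if inducedFace (s, a) v = inducedFace (s, b) u then w v * w u else 0) =
      if a = b then ∑ v ∈ s, w v ^ 2 else 0 := by
  calc _ = ∑ v ∈ s, ∑ u ∈ s, if a = b ∧ v = u then w v * w u else 0 :=
        Finset.sum_congr rfl fun v hv => by simp only [inducedFace_mk_inj hv]
    _ = _ := by
        by_cases h : a = b <;> simp +contextual [h, sq]

theorem sum_sum_ite_inducedFace_of_ne {σ τ : OSimp n} (hne : σ.1 ≠ τ.1) :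
    (∑ v ∈ σ.1, ∑ u ∈ τ.1, if inducedFace σ v = inducedFace τ u then w v * w u else 0) =
      if DownAdj n σ τ then (∑ v ∈ σ.1 \ τ.1, w v) * ∑ u ∈ τ.1 \ σ.1, w u else 0 := by
  calc _ = ∑ v ∈ σ.1, ∑ u ∈ τ.1,
          if DownAdj n σ τ ∧ v ∉ τ.1 ∧ u ∉ σ.1 then w v * w u else 0 :=
        Finset.sum_congr rfl fun v hv => Finset.sum_congr rfl fun u hu => by
          simp only [inducedFace_eq_inducedFace_iff_downAdj hne hv hu]
    _ = _ := by
        by_cases h : DownAdj n σ τ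
        · simp only [h, true_and, if_true, ite_and, Finset.sum_ite_irrel, Finset.sum_const_zero]
          simp only [← Finset.sum_filter, Finset.filter_notMem_eq_sdiff, Finset.sum_mul_sum]
        · simp [h]

theorem Kdown_mul_Pdown (hK : Kdown n X w k ≠ 0) {σ τ : OSimp n}
    (hσ : σ.1 ∈ simplices n X k) (hτ : τ.1 ∈ simplices n X k) :
    Kdown n X w k * Pdown n X w k (some σ) (some τ) =
      ∑ v ∈ σ.1, ∑ u ∈ τ.1, if inducedFace σ v = inducedFace τ u then w v * w u else 0 := by
  obtain ⟨hσX, hσk⟩ := mem_simplices.mp hσ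
  obtain ⟨hτX, hτk⟩ := mem_simplices.mp hτ
  simp only [Pdown, hσX, hσk, hτX, hτk, and_self, if_true, mul_ite, mul_zero,
    mul_div_cancel₀ _ hK]
  obtain ⟨s, a⟩ := σ
  obtain ⟨t, b⟩ := τ
  by_cases hst : s = t
  · subst hst
    simp [sum_sum_ite_inducedFace_self, DownAdj]
  · rw [sum_sum_ite_inducedFace_of_ne hst, if_neg fun h => hst (Prod.mk.inj h).1]

theorem ite_faceSign_mul_faceSign (a : Bool) (u v : Fin n) :
    (if s.erase v = t.erase u then faceSign s v * faceSign t u else 0) =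
      (if inducedFace (s, a) v = inducedFace (t, a) u then 1 else 0) -
        if inducedFace (s, a) v = inducedFace (t, !a) u then 1 else 0 := by
  by_cases h : s.erase v = t.erase u
  · cases a <;> cases hv : faceFlip n s v <;> cases hu : faceFlip n t u <;>
      simp [faceSign_eq_ite, inducedFace, h, hv, hu]
  · simp [inducedFace, h]

theorem downLap_eq_Kdown_mul_Pdown_sub (hK : Kdown n X w k ≠ 0)
    (hs : s ∈ simplices n X k) (ht : t ∈ simplices n X k) (a : Bool) :
    downLap n X w k t s = Kdown n X w k *
      (Pdown n X w k (some (s, a)) (some (t, a)) -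
        Pdown n X w k (some (s, a)) (some (t, !a))) := by
  rw [mul_sub, Kdown_mul_Pdown hK hs ht, Kdown_mul_Pdown hK hs ht, downLap_apply ht hs]
  simp only [← Finset.sum_sub_distrib]
  refine Finset.sum_congr rfl fun v _ => Finset.sum_congr rfl fun u _ => ?_
  simpa only [sub_mul, ite_mul, one_mul, zero_mul] using
    congrArg (· * (w v * w u)) (ite_faceSign_mul_faceSign a u v)

theorem Kdown_pos (hw : ∀ v, 0 < w v) (hne : (simplices n X k).Nonempty) :
    0 < Kdown n X w k := by
  obtain ⟨s, hs⟩ := hne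
  obtain ⟨hsX, hsk⟩ := mem_simplices.mp hs
  let f : Finset (Fin n) → ℝ := fun s => ∑ u ∈ s, ∑ v ∈ (s.erase u)ᶜ, w u * w v
  have hbdd : BddAbove {x | ∃ σ ∈ X, σ.card = k + 1 ∧ x = f σ} :=
    (Set.finite_range f).bddAbove.mono (by rintro _ ⟨σ, -, -, rfl⟩; exact ⟨σ, rfl⟩)
  have hpos : 0 < f s := by
    refine Finset.sum_pos (fun u _ => Finset.sum_pos (fun v _ => mul_pos (hw u) (hw v)) ?_) ?_
    · exact ⟨u, by simp⟩
    · exact Finset.card_pos.mp (by omega)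
  exact hpos.trans_le (le_csSup hbdd ⟨s, hsX, hsk, rfl⟩)

theorem down_walk_encodes_down_laplacian_general {α : ℕ} (hK : Kdown n X w k ≠ 0)
    {U : Matrix (QIdx n × (Fin α → Bool)) (QIdx n × (Fin α → Bool)) ℂ}
    (henc : PiPM n X k * compressA n α U * PiPM n X k =
      PiPM n X k * toQMat n (Pdown n X w k) * PiPM n X k) :
    PiK n X k *
        compressA n α ((hzGate n ⊗ₖ (1 : Matrix (Fin α → Bool) (Fin α → Bool) ℂ)) * U) *
        PiK n X k =
      ((Real.sqrt 2 : ℂ) * (Kdown n X w k : ℂ))⁻¹ • lapQ n (downLap n X w k) := by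
  rw [PiPM_eq_coordProj, coordProj_mul_mul_coordProj_eq_iff] at henc
  have hsupp := PiK_mul_lapQ_mul_PiK (L := downLap n X w k) (k := k)
    fun _ _ => mem_simplices_of_downLap_ne_zero
  rw [compressA_kronecker_one_mul, ← hsupp, ← Matrix.smul_mul, ← Matrix.mul_smul,
    PiK_eq_coordProj, coordProj_mul_mul_coordProj_eq_iff]
  rintro _ ⟨t, ht, rfl⟩ _ ⟨s, hs, rfl⟩
  have hU (a : Bool) : compressA n α U (encode n (some (t, a))) (encode n (some (s, false))) =
      Pdown n X w k (some (s, false)) (some (t, a)) := by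
    rw [henc _ ⟨(t, a), ht, rfl⟩ _ ⟨(s, false), hs, rfl⟩, toQMat_encode]
  simp only [hzGate_mul_apply_encode, hU, Matrix.smul_apply, lapQ_encode,
    downLap_eq_Kdown_mul_Pdown_sub hK hs ht false]
  have hK' : (Kdown n X w k : ℂ) ≠ 0 := Complex.ofReal_ne_zero.mpr hK
  simp [field]

/-- If `U` is a unitary encoding of `Π_k^± P^{down} Π_k^±` with an
`α`-qubit ancilla, then `V = ((I^{⊗n} ⊗ HZ ⊗ I) ⊗ I^{⊗α}) U` is a unitary encoding of
`Δ_k^{down}/(√2 · K^{down})`. -/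
theorem down_walk_encodes_down_laplacian (n k α : ℕ) (X : Finset (Finset (Fin n)))
    (hX : IsComplex n X) (w : Fin n → ℝ) (hw : ∀ v, 0 < w v)
    (hne : (simplices n X k).Nonempty)
    (U : Matrix (QIdx n × (Fin α → Bool)) (QIdx n × (Fin α → Bool)) ℂ)
    (hU : U ∈ Matrix.unitaryGroup (QIdx n × (Fin α → Bool)) ℂ)
    (henc : PiPM n X k * compressA n α U * PiPM n X k =
      PiPM n X k * toQMat n (Pdown n X w k) * PiPM n X k) :
    PiK n X k *
        compressA n α ((hzGate n ⊗ₖ (1 : Matrix (Fin α → Bool) (Fin α → Bool) ℂ)) * U) *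
        PiK n X k =
      ((Real.sqrt 2 : ℂ) * (Kdown n X w k : ℂ))⁻¹ • lapQ n (downLap n X w k) :=
  down_walk_encodes_down_laplacian_general (Kdown_pos hw hne).ne' henc

end QWSC
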